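/- arXiv:2605.11857 — 2 statements merged into one kernel-verified Lean document; each statement's English description precedes it below -/
import Mathlib

section
/- Let Φ : ℝ^d → ℝ be differentiable with Λ-Lipschitz gradient (Λ > 0) and bounded below, and set Φ* = inf_θ Φ(θ). Fix 0 < η ≤ 1/(4Λ), T ≥ 1, Δ ≥ 0, σ ≥ 0, ζ ≥ 0. On a filtered probability space with filtration (F_t), let θ^0 be deterministic and define θ^{t+1} = θ^t − η g^t for t = 0, …, T−1, where g^t = ∇Φ(θ^t) + b^t + ξ^t, each θ^t and b^t is F_t-measurable, ‖b^t‖ ≤ Δ/2 almost surely, E[ξ^t | F_t] = 0, and E[‖ξ^t‖² | F_t] ≤ σ² + ζ²/4. Then (1/T) ∑_{t=0}^{T−1} E[‖∇Φ(θ^t)‖²] ≤ 4(Φ(θ^0) − Φ*)/(ηT) + 2Λη·(σ² + ζ²/4) + (3/4)·Δ². -/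
open MeasureTheory

lemma sgd_descent {d : ℕ}
    (Φ : EuclideanSpace ℝ (Fin d) → ℝ) (hdiff : Differentiable ℝ Φ)
    (Λ : ℝ) (hlip : ∀ x y, ‖gradient Φ x - gradient Φ y‖ ≤ Λ * ‖x - y‖)
    (x v : EuclideanSpace ℝ (Fin d)) :
    Φ (x + v) ≤ Φ x + inner ℝ (gradient Φ x) v + Λ / 2 * ‖v‖ ^ 2 := by
  have hd : ∀ s : ℝ, HasDerivAt
      (fun s : ℝ => Φ (x + s • v) - s * inner ℝ (gradient Φ x) v - Λ / 2 * ‖v‖ ^ 2 * s ^ 2)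
      (inner ℝ (gradient Φ (x + s • v)) v - inner ℝ (gradient Φ x) v - Λ * ‖v‖ ^ 2 * s) s := by
    intro s
    have h1 := ((hdiff (x + s • v)).hasGradientAt).hasFDerivAt
    have h2 : HasDerivAt (fun s : ℝ => x + s • v) v s := by
      simpa using ((hasDerivAt_id s).smul_const v).const_add x
    have h3 := h1.comp_hasDerivAt s h2
    have h4 := (hasDerivAt_id s).mul_const (inner ℝ (gradient Φ x) v)
    have h5 := ((hasDerivAt_id s).pow 2).const_mul (Λ / 2 * ‖v‖ ^ 2)
    refine ((h3.sub h4).sub h5).congr_deriv ?_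
    simp
    ring
  have hanti := antitoneOn_of_deriv_nonpos (convex_Icc (0:ℝ) 1)
    (fun s _ => (hd s).continuousAt.continuousWithinAt)
    (fun s _ => (hd s).differentiableAt.differentiableWithinAt)
    (fun s hs => by
      rw [interior_Icc] at hs
      rw [(hd s).deriv, ← inner_sub_left]
      have h1 := real_inner_le_norm (gradient Φ (x + s • v) - gradient Φ x) v
      have h2 := hlip (x + s • v) x
      rw [add_sub_cancel_left, norm_smul, Real.norm_of_nonneg hs.1.le] at h2
      have h3 := mul_le_mul_of_nonneg_right h2 (norm_nonneg v)
      nlinarith)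
  have := hanti (show (0:ℝ) ∈ Set.Icc (0:ℝ) 1 by simp) (show (1:ℝ) ∈ Set.Icc (0:ℝ) 1 by simp)
    zero_le_one
  simp only [one_smul, zero_smul, add_zero, one_mul, zero_mul] at this
  linarith

lemma sgd_integrable_inner {Ω : Type*} {m0 : MeasurableSpace Ω} {P : Measure Ω} {d : ℕ}
    {u v : Ω → EuclideanSpace ℝ (Fin d)} (hu : MemLp u 2 P) (hv : MemLp v 2 P) :
    Integrable (fun ω => inner ℝ (u ω) (v ω)) P := by
  have hu2 := (memLp_two_iff_integrable_sq_norm hu.1).1 hu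
  have hv2 := (memLp_two_iff_integrable_sq_norm hv.1).1 hv
  refine (hu2.add hv2).mono' (hu.1.inner hv.1) (Filter.Eventually.of_forall fun ω => ?_)
  have := norm_inner_le_norm (𝕜 := ℝ) (u ω) (v ω)
  simp only [Pi.add_apply]
  nlinarith [sq_nonneg (‖u ω‖ - ‖v ω‖), sq_nonneg (‖u ω‖ + ‖v ω‖)]

lemma sgd_integral_inner_zero {Ω : Type*} {m m0 : MeasurableSpace Ω} {P : Measure Ω}
    [IsProbabilityMeasure P] (hm : m ≤ m0) {d : ℕ}
    {u v : Ω → EuclideanSpace ℝ (Fin d)} (hu : MemLp u 2 P) (hv : MemLp v 2 P)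
    (hum : StronglyMeasurable[m] u) (hc : P[v|m] =ᵐ[P] 0) :
    ∫ ω, inner ℝ (u ω) (v ω) ∂P = 0 := by
  have h : P[fun ω => inner ℝ (u ω) (v ω)|m] =ᵐ[P] fun ω => inner ℝ (u ω) (P[v|m] ω) :=
   condExp_bilin_of_stronglyMeasurable_left (μ := P)
    (innerSL ℝ (E := EuclideanSpace ℝ (Fin d))) hum
    (sgd_integrable_inner hu hv) (hv.integrable (by norm_num))
  rw [← integral_condExp hm, integral_congr_ae h]
  refine integral_eq_zero_of_ae ?_
  filter_upwards [hc] with ω hω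
  simp [hω]

lemma sgd_integral_add5 {Ω : Type*} {m0 : MeasurableSpace Ω} {P : Measure Ω}
    {f1 f2 f3 f4 f5 : Ω → ℝ} (h1 : Integrable f1 P) (h2 : Integrable f2 P)
    (h3 : Integrable f3 P) (h4 : Integrable f4 P) (h5 : Integrable f5 P) :
    ∫ ω, (f1 ω + f2 ω + f3 ω + f4 ω + f5 ω) ∂P =
      ∫ ω, f1 ω ∂P + ∫ ω, f2 ω ∂P + ∫ ω, f3 ω ∂P + ∫ ω, f4 ω ∂P + ∫ ω, f5 ω ∂P := by
  rw [← integral_add' h1 h2, ← integral_add' (h1.add h2) h3,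
    ← integral_add' ((h1.add h2).add h3) h4, ← integral_add' (((h1.add h2).add h3).add h4) h5]
  rfl

lemma sgd_pointwise {E : Type*} [NormedAddCommGroup E] [InnerProductSpace ℝ E]
    (Λ η Δ : ℝ) (hΛ : 0 < Λ) (hη : 0 < η) (hη' : Λ * η ≤ 1 / 4) (G b x : E) (hb : ‖b‖ ≤ Δ / 2) :
    inner ℝ G (-(η • (G + b + x))) + Λ / 2 * ‖-(η • (G + b + x))‖ ^ 2 ≤
      - (η / 2) * ‖G‖ ^ 2 + η * Δ ^ 2 / 8 + inner ℝ ((Λ * η ^ 2) • (G + b) - η • G) x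
        + Λ * η ^ 2 / 2 * ‖x‖ ^ 2 := by
  rw [norm_neg, norm_smul, mul_pow, norm_add_sq_real (G + b) x, inner_neg_right, inner_smul_right,
    inner_sub_left, inner_smul_left, inner_smul_left, inner_add_right, inner_add_right,
    real_inner_self_eq_norm_sq, Real.norm_of_nonneg hη.le]
  simp only [conj_trivial]
  have h1 := norm_add_sq_real G b
  have h2 : 0 ≤ ‖G + b‖ ^ 2 := by positivity
  have h3 : 0 ≤ ‖G + b‖ ^ 2 := by positivity
  have h4 : ‖b‖ ^ 2 ≤ Δ ^ 2 / 4 := by nlinarith [norm_nonneg b]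
  have h5 : Λ * η ^ 2 / 2 * ‖G + b‖ ^ 2 ≤ η / 8 * ‖G + b‖ ^ 2 := by
    apply mul_le_mul_of_nonneg_right _ h2
    nlinarith
  have h6 : - (‖G‖ ^ 2) - inner ℝ G b + 1 / 8 * ‖G + b‖ ^ 2 ≤ - (1 / 2) * ‖G‖ ^ 2 + Δ ^ 2 / 8 := by
    nlinarith
  have h7 := mul_le_mul_of_nonneg_left h6 hη.le
  nlinarith

set_option maxHeartbeats 2000000 in
/-- Stationarity for biased SGD: if `Φ` is differentiable with `Λ`-Lipschitz gradient and
bounded below, `0 < η ≤ 1/(4Λ)`, and the iterates satisfy `θ^{t+1} = θ^t − η g^t` with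
`g^t = ∇Φ(θ^t) + b^t + ξ^t`, `θ^t, b^t` being `F_t`-measurable, `‖b^t‖ ≤ Δ/2` a.s.,
`E[ξ^t | F_t] = 0` and `E[‖ξ^t‖² | F_t] ≤ σ² + ζ²/4`, then
`(1/T) ∑_{t<T} E[‖∇Φ(θ^t)‖²] ≤ 4(Φ(θ⁰) − Φ*)/(ηT) + 2Λη(σ² + ζ²/4) + (3/4)Δ²`. -/
theorem biased_sgd_stationarity {d : ℕ}
    (Φ : EuclideanSpace ℝ (Fin d) → ℝ) (hdiff : Differentiable ℝ Φ)
    (Λ : ℝ) (hΛ : 0 < Λ)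
    (hlip : ∀ x y, ‖gradient Φ x - gradient Φ y‖ ≤ Λ * ‖x - y‖)
    (hbdd : BddBelow (Set.range Φ))
    (η : ℝ) (hη : 0 < η) (hη' : η ≤ 1 / (4 * Λ))
    {T : ℕ} (hT : 1 ≤ T)
    (Δ σ ζ : ℝ) (hΔ : 0 ≤ Δ) (hσ : 0 ≤ σ) (hζ : 0 ≤ ζ)
    {Ω : Type*} {m0 : MeasurableSpace Ω} (P : Measure Ω) [IsProbabilityMeasure P]
    (ℱ : Filtration ℕ m0)
    (θ0 : EuclideanSpace ℝ (Fin d))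
    (θ b ξ g : ℕ → Ω → EuclideanSpace ℝ (Fin d))
    (hθ0 : ∀ ω, θ 0 ω = θ0)
    (hg : ∀ t < T, ∀ ω, g t ω = gradient Φ (θ t ω) + b t ω + ξ t ω)
    (hrec : ∀ t < T, ∀ ω, θ (t + 1) ω = θ t ω - η • g t ω)
    (hθmeas : ∀ t < T, Measurable[ℱ t] (θ t))
    (hbmeas : ∀ t < T, Measurable[ℱ t] (b t))
    (hbbdd : ∀ t < T, ∀ᵐ ω ∂P, ‖b t ω‖ ≤ Δ / 2)
    (hξint : ∀ t < T, Integrable (ξ t) P)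
    (hξsqint : ∀ t < T, Integrable (fun ω => ‖ξ t ω‖ ^ 2) P)
    (hξcond : ∀ t < T, P[ξ t|ℱ t] =ᵐ[P] 0)
    (hξcondvar : ∀ t < T,
      ∀ᵐ ω ∂P, (P[fun ω' => ‖ξ t ω'‖ ^ 2|ℱ t]) ω ≤ σ ^ 2 + ζ ^ 2 / 4) :
    (1 / T : ℝ) * ∑ t ∈ Finset.range T, ∫ ω, ‖gradient Φ (θ t ω)‖ ^ 2 ∂P ≤
      4 * (Φ θ0 - ⨅ x, Φ x) / (η * T)
        + 2 * Λ * η * (σ ^ 2 + ζ ^ 2 / 4)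
        + (3 / 4) * Δ ^ 2 := by
  have hLη : Λ * η ≤ 1 / 4 := by
    rw [le_div_iff₀ (by positivity)] at hη'
    linarith
  have hGc : Continuous (gradient Φ) := by
    refine (LipschitzWith.of_dist_le_mul (K := ⟨Λ, hΛ.le⟩) fun x y => ?_).continuous
    rw [dist_eq_norm, dist_eq_norm]
    exact hlip x y
  have hξL : ∀ t < T, MemLp (ξ t) 2 P := fun t ht =>
    (memLp_two_iff_integrable_sq_norm (hξint t ht).1).2 (hξsqint t ht)
  have hbL : ∀ t < T, MemLp (b t) 2 P := fun t ht =>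
    MemLp.of_bound ((hbmeas t ht).mono (ℱ.le t) le_rfl).aestronglyMeasurable (Δ / 2) (hbbdd t ht)
  have hGL' : ∀ t, MemLp (θ t) 2 P → MemLp (fun ω => gradient Φ (θ t ω)) 2 P := by
    intro t ht
    have h0 : MemLp (fun ω => ‖gradient Φ 0‖ + Λ * ‖θ t ω‖) 2 P := by
      have ha : MemLp (fun _ : Ω => ‖gradient Φ 0‖) 2 P := memLp_const _
      have hb : MemLp (fun ω => Λ * ‖θ t ω‖) 2 P := ht.norm.const_mul Λ
      exact ha.add hb
    refine h0.of_le (hGc.comp_aestronglyMeasurable ht.1) (Filter.Eventually.of_forall fun ω => ?_)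
    have h1 := hlip (θ t ω) 0
    rw [sub_zero] at h1
    have h2 := norm_le_norm_add_norm_sub' (gradient Φ (θ t ω)) (gradient Φ 0)
    refine le_trans ?_ (le_abs_self _)
    linarith
  have hθL : ∀ t ≤ T, MemLp (θ t) 2 P := by
    intro t
    induction t with
    | zero =>
      intro _
      rw [show θ 0 = fun _ => θ0 from funext hθ0]
      exact memLp_const _
    | succ t ih =>
      intro ht
      have ht' : t < T := ht
      have hθt := ih ht'.le
      have : θ (t + 1) = fun ω => θ t ω - η • (gradient Φ (θ t ω) + b t ω + ξ t ω) := by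
        funext ω
        rw [hrec t ht', hg t ht']
      rw [this]
      have h1 : MemLp (fun ω => gradient Φ (θ t ω) + b t ω + ξ t ω) 2 P :=
        ((hGL' t hθt).add (hbL t ht')).add (hξL t ht')
      have h2 : MemLp (fun ω => η • (gradient Φ (θ t ω) + b t ω + ξ t ω)) 2 P :=
        h1.const_smul η
      exact hθt.sub h2
  have hGL : ∀ t ≤ T, MemLp (fun ω => gradient Φ (θ t ω)) 2 P := fun t ht => hGL' t (hθL t ht)
  have hinf : ∀ x, ⨅ x, Φ x ≤ Φ x := fun x => ciInf_le hbdd x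
  have hΦi : ∀ t ≤ T, Integrable (fun ω => Φ (θ t ω)) P := by
    intro t ht
    have hth := hθL t ht
    have h2 := (memLp_two_iff_integrable_sq_norm hth.1).1 hth
    have h1 := (hth.integrable (by norm_num)).norm
    have hbd : Integrable (fun ω => (|⨅ x, Φ x| + |Φ 0|) + ‖gradient Φ 0‖ * ‖θ t ω‖
        + Λ / 2 * ‖θ t ω‖ ^ 2) P := by
      have ha : Integrable (fun _ : Ω => |⨅ x, Φ x| + |Φ 0|) P := integrable_const _
      exact (ha.add (h1.const_mul _)).add (h2.const_mul _)
    refine hbd.mono' (hdiff.continuous.comp_aestronglyMeasurable hth.1)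
      (Filter.Eventually.of_forall fun ω => ?_)
    have ha := sgd_descent Φ hdiff Λ hlip 0 (θ t ω)
    rw [zero_add] at ha
    have hb := real_inner_le_norm (gradient Φ 0) (θ t ω)
    have hc := hinf (θ t ω)
    have hd := neg_abs_le (⨅ x, Φ x)
    have he := le_abs_self (Φ 0)
    have h3 : 0 ≤ Λ / 2 * ‖θ t ω‖ ^ 2 := by positivity
    have h4 : 0 ≤ ‖gradient Φ 0‖ * ‖θ t ω‖ := by positivity
    have h5 := abs_nonneg (⨅ x, Φ x)
    have h6 := abs_nonneg (Φ 0)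
    rw [Real.norm_eq_abs, abs_le]
    constructor <;> linarith
  have hstep : ∀ t < T, η / 2 * ∫ ω, ‖gradient Φ (θ t ω)‖ ^ 2 ∂P ≤
      (∫ ω, Φ (θ t ω) ∂P - ∫ ω, Φ (θ (t + 1) ω) ∂P) + η * Δ ^ 2 / 8
        + Λ * η ^ 2 / 2 * (σ ^ 2 + ζ ^ 2 / 4) := by
    intro t ht
    have hG := hGL t ht.le
    have hw : MemLp (fun ω => (Λ * η ^ 2) • (gradient Φ (θ t ω) + b t ω)
        - η • gradient Φ (θ t ω)) 2 P :=
      ((hG.add (hbL t ht)).const_smul (Λ * η ^ 2)).sub (hG.const_smul η)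
    have hGm : StronglyMeasurable[ℱ t] (fun ω => gradient Φ (θ t ω)) :=
      hGc.comp_stronglyMeasurable (hθmeas t ht).stronglyMeasurable
    have hwm : StronglyMeasurable[ℱ t] (fun ω => (Λ * η ^ 2) • (gradient Φ (θ t ω) + b t ω)
        - η • gradient Φ (θ t ω)) :=
      ((hGm.add (hbmeas t ht).stronglyMeasurable).const_smul (Λ * η ^ 2)).sub (hGm.const_smul η)
    have hz := sgd_integral_inner_zero (ℱ.le t) hw (hξL t ht) hwm (hξcond t ht)
    have hwi := sgd_integrable_inner hw (hξL t ht)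
    have hG2 := (memLp_two_iff_integrable_sq_norm hG.1).1 hG
    have hvar : ∫ ω, ‖ξ t ω‖ ^ 2 ∂P ≤ σ ^ 2 + ζ ^ 2 / 4 := by
      rw [← integral_condExp (ℱ.le t)]
      have := integral_mono_ae (μ := P) integrable_condExp (integrable_const _) (hξcondvar t ht)
      simpa using this
    have hi1 := hΦi t ht.le
    have hi2 := hG2.const_mul (-(η / 2))
    have hi3 : Integrable (fun _ : Ω => η * Δ ^ 2 / 8) P := integrable_const _
    have hi5 := (hξsqint t ht).const_mul (Λ * η ^ 2 / 2)
    have hle : (fun ω => Φ (θ (t + 1) ω)) ≤ᵐ[P] fun ω => Φ (θ t ω)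
        + -(η / 2) * ‖gradient Φ (θ t ω)‖ ^ 2 + η * Δ ^ 2 / 8
        + inner ℝ ((Λ * η ^ 2) • (gradient Φ (θ t ω) + b t ω) - η • gradient Φ (θ t ω)) (ξ t ω)
        + Λ * η ^ 2 / 2 * ‖ξ t ω‖ ^ 2 := by
      filter_upwards [hbbdd t ht] with ω hω
      have h1 := sgd_pointwise Λ η Δ hΛ hη hLη (gradient Φ (θ t ω)) (b t ω) (ξ t ω) hω
      have h2 := sgd_descent Φ hdiff Λ hlip (θ t ω)
        (-(η • (gradient Φ (θ t ω) + b t ω + ξ t ω)))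
      rw [← sub_eq_add_neg, ← hg t ht, ← hrec t ht, hg t ht] at h2
      linarith
    have hint := integral_mono_ae (hΦi (t + 1) ht)
      ((((hi1.add hi2).add hi3).add hwi).add hi5) hle
    simp only [Pi.add_apply] at hint
    rw [sgd_integral_add5 hi1 hi2 hi3 hwi hi5, hz, integral_const_mul, integral_const_mul] at hint
    simp only [integral_const, probReal_univ, one_smul] at hint
    have hm := mul_le_mul_of_nonneg_left hvar (show 0 ≤ Λ * η ^ 2 / 2 by positivity)
    linarith
  have hsum := Finset.sum_le_sum (fun t ht => hstep t (Finset.mem_range.1 ht))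
  rw [← Finset.mul_sum, Finset.sum_add_distrib, Finset.sum_add_distrib,
    Finset.sum_range_sub' (fun t => ∫ ω, Φ (θ t ω) ∂P)] at hsum
  simp only [Finset.sum_const, Finset.card_range, nsmul_eq_mul, hθ0, integral_const,
    probReal_univ, one_smul] at hsum
  have hlow : ⨅ x, Φ x ≤ ∫ ω, Φ (θ T ω) ∂P := by
    have := integral_mono (μ := P) (integrable_const (⨅ x, Φ x)) (hΦi T le_rfl)
      (fun ω => hinf (θ T ω))
    simpa using this
  have hTpos : (0 : ℝ) < T := by exact_mod_cast hT
  have hinf0 := hinf θ0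
  set S := ∑ t ∈ Finset.range T, ∫ ω, ‖gradient Φ (θ t ω)‖ ^ 2 ∂P
  have hS : 0 ≤ S := Finset.sum_nonneg fun t _ => integral_nonneg fun ω => by positivity
  have key : η * S ≤ 4 * (Φ θ0 - ⨅ x, Φ x) + 2 * Λ * η * (σ ^ 2 + ζ ^ 2 / 4) * (η * T)
      + (3 / 4) * Δ ^ 2 * (η * T) := by
    have h1 : 0 ≤ Δ ^ 2 * (η * T) := by positivity
    have h2 : 0 ≤ Λ * η * (σ ^ 2 + ζ ^ 2 / 4) * (η * T) := by positivity
    linarith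
  have hηT : 0 < η * T := by positivity
  have e1 : (1 / T : ℝ) * S = η * S / (η * T) := by field_simp
  rw [e1, div_le_iff₀ hηT, add_mul, add_mul, div_mul_cancel₀ _ hηT.ne']
  exact key
end

section
/- Let μ₁ and μ₁' be probability measures on a measurable space Ω₁, let κ and κ' be Markov kernels from Ω₁ to a measurable space Ω₂, and let ε₁, ε₂, δ₁, δ₂ ≥ 0. Suppose (i) for every measurable set S ⊆ Ω₁, μ₁(S) ≤ e^{ε₁} · μ₁'(S) + δ₁, and (ii) for every ω ∈ Ω₁ and every measurable set S ⊆ Ω₂, κ(ω)(S) ≤ e^{ε₂} · κ'(ω)(S) + δ₂. Then the composed measures on Ω₁ × Ω₂ satisfy, for every measurable set S ⊆ Ω₁ × Ω₂, (μ₁ ⊗ κ)(S) ≤ e^{ε₁ + ε₂} · (μ₁' ⊗ κ')(S) + δ₁ + δ₂, where μ ⊗ κ denotes the measure A ↦ ∫_{Ω₁} κ(ω)({ω₂ : (ω, ω₂) ∈ A}) dμ(ω). -/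
open MeasureTheory ProbabilityTheory

/-- Approximate domination of measures on sets extends to measurable functions bounded by one. -/
lemma lintegral_le_of_approx_dom {Ω : Type*} [MeasurableSpace Ω] (μ ν : Measure Ω)
    [IsFiniteMeasure μ] [IsFiniteMeasure ν] (δ : ENNReal)
    (H : ∀ S : Set Ω, MeasurableSet S → μ S ≤ ν S + δ)
    (h : Ω → ENNReal) (hm : Measurable h) (h1 : ∀ x, h x ≤ 1) :
    ∫⁻ x, h x ∂μ ≤ ∫⁻ x, h x ∂ν + δ := by
  obtain ⟨s, hs⟩ := exists_isHahnDecomposition μ ν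
  have hsm := hs.measurableSet
  rw [← lintegral_add_compl h hsm, ← lintegral_add_compl (μ := ν) h hsm, add_assoc]
  refine add_le_add (lintegral_mono' hs.le_on le_rfl) ?_
  have key : ∀ ρ : Measure Ω,
      ∫⁻ x in sᶜ, h x ∂ρ + ∫⁻ x in sᶜ, (1 - h x) ∂ρ = ρ sᶜ := by
    intro ρ
    rw [← lintegral_add_left hm]
    simp [add_tsub_cancel_of_le (h1 _)]
  have hfin : ∫⁻ x in sᶜ, (1 - h x) ∂μ ≠ ⊤ :=
    ne_top_of_le_ne_top (measure_ne_top μ sᶜ) (by rw [← key μ]; exact le_add_self)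
  refine (ENNReal.add_le_add_iff_right hfin).1 ?_
  calc _ = μ sᶜ := key μ
    _ ≤ ν sᶜ + δ := H _ hsm.compl
    _ = ∫⁻ x in sᶜ, h x ∂ν + ∫⁻ x in sᶜ, (1 - h x) ∂ν + δ := by rw [key ν]
    _ ≤ ∫⁻ x in sᶜ, h x ∂ν + ∫⁻ x in sᶜ, (1 - h x) ∂μ + δ := by
        exact add_le_add_left (add_le_add_right (lintegral_mono' hs.ge_on_compl le_rfl) _) _
    _ = _ := by ring

/-- Adaptive composition of differential privacy: if `μ₁(S) ≤ e^{ε₁} μ₁'(S) + δ₁` for all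
measurable `S ⊆ Ω₁`, and the Markov kernels satisfy `κ(ω)(S) ≤ e^{ε₂} κ'(ω)(S) + δ₂` for
every `ω` and measurable `S ⊆ Ω₂`, then the composed measures on `Ω₁ × Ω₂` satisfy
`(μ₁ ⊗ κ)(S) ≤ e^{ε₁ + ε₂} (μ₁' ⊗ κ')(S) + δ₁ + δ₂` for all measurable `S`. -/
theorem dp_adaptive_composition {Ω₁ Ω₂ : Type*} [MeasurableSpace Ω₁] [MeasurableSpace Ω₂]
    (μ₁ μ₁' : Measure Ω₁) [IsProbabilityMeasure μ₁] [IsProbabilityMeasure μ₁']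
    (κ κ' : Kernel Ω₁ Ω₂) [IsMarkovKernel κ] [IsMarkovKernel κ']
    (ε₁ ε₂ δ₁ δ₂ : ℝ) (hε₁ : 0 ≤ ε₁) (hε₂ : 0 ≤ ε₂) (hδ₁ : 0 ≤ δ₁) (hδ₂ : 0 ≤ δ₂)
    (hdp₁ : ∀ S : Set Ω₁, MeasurableSet S →
      μ₁ S ≤ ENNReal.ofReal (Real.exp ε₁) * μ₁' S + ENNReal.ofReal δ₁)
    (hdp₂ : ∀ ω : Ω₁, ∀ S : Set Ω₂, MeasurableSet S →
      κ ω S ≤ ENNReal.ofReal (Real.exp ε₂) * κ' ω S + ENNReal.ofReal δ₂) :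
    ∀ S : Set (Ω₁ × Ω₂), MeasurableSet S →
      (μ₁.compProd κ) S ≤
        ENNReal.ofReal (Real.exp (ε₁ + ε₂)) * (μ₁'.compProd κ') S +
          ENNReal.ofReal (δ₁ + δ₂) := by
  intro S hS
  have hgm : Measurable fun ω => κ' ω (Prod.mk ω ⁻¹' S) :=
    Kernel.measurable_kernel_prodMk_left hS
  rw [Measure.compProd_apply hS, Measure.compProd_apply hS]
  set c₁ := ENNReal.ofReal (Real.exp ε₁) with hc₁
  set c₂ := ENNReal.ofReal (Real.exp ε₂) with hc₂
  set h : Ω₁ → ENNReal := fun ω => min 1 (c₂ * κ' ω (Prod.mk ω ⁻¹' S)) with hh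
  have hm : Measurable h := measurable_const.min (hgm.const_mul _)
  have hpt : ∀ ω, κ ω (Prod.mk ω ⁻¹' S) ≤ h ω + ENNReal.ofReal δ₂ := by
    intro ω
    rw [hh]
    dsimp only
    rw [min_add_add_right 1 (c₂ * κ' ω (Prod.mk ω ⁻¹' S)) (ENNReal.ofReal δ₂) |>.symm]
    exact le_min (prob_le_one.trans le_self_add) (hdp₂ ω _ (measurable_prodMk_left hS))
  have : IsFiniteMeasure (c₁ • μ₁') := Measure.smul_finite _ ENNReal.ofReal_ne_top
  have hmain := lintegral_le_of_approx_dom μ₁ (c₁ • μ₁') (ENNReal.ofReal δ₁)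
    (fun T hT => by simpa using hdp₁ T hT) h hm (fun x => min_le_left _ _)
  rw [lintegral_smul_measure, smul_eq_mul] at hmain
  calc ∫⁻ ω, κ ω (Prod.mk ω ⁻¹' S) ∂μ₁
      ≤ ∫⁻ ω, (h ω + ENNReal.ofReal δ₂) ∂μ₁ := lintegral_mono hpt
    _ = ∫⁻ ω, h ω ∂μ₁ + ENNReal.ofReal δ₂ := by rw [lintegral_add_left hm]; simp
    _ ≤ (c₁ * ∫⁻ ω, h ω ∂μ₁' + ENNReal.ofReal δ₁) + ENNReal.ofReal δ₂ := by gcongr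
    _ ≤ (c₁ * ∫⁻ ω, c₂ * κ' ω (Prod.mk ω ⁻¹' S) ∂μ₁' + ENNReal.ofReal δ₁)
          + ENNReal.ofReal δ₂ := by
        gcongr
        exact min_le_right _ _
    _ = _ := by
        rw [lintegral_const_mul _ hgm, Real.exp_add, ENNReal.ofReal_mul (Real.exp_pos _).le,
          ENNReal.ofReal_add hδ₁ hδ₂, mul_assoc, add_assoc]
end
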